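/- Let k ≥ 1, m = 2k+1, let ρ be a d×d density matrix, and let A₀, …, A_{m−1} be d×d complex matrices, each Hermitian and unitary (A_iᴴ = A_i and A_i² = 1), such that A_i·A_j = −A_j·A_i whenever j ≡ i ± 1 (mod m), and A_i·A_j = A_j·A_i for all other pairs i ≠ j. Then Σ_{i=0}^{m−1} ( Re tr(ρ·A_i) )² ≤ k. -/

import Mathlib

open Matrix ComplexOrder

/-!
Let `J = A₀ A₁ ⋯ A₂ₖ`. Each `Aᵢ` anticommutes with exactly two of the factors, so `J` commutes with
every `Aᵢ`, and reversing the product passes `2k + 1` anticommuting pairs, so `Jᴴ = -J`: the product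
`J` plays the role of an imaginary unit. A Jordan–Wigner transformation yields Majorana operators
`γⱼ = (J A₀) ⋯ (J Aⱼ₋₁)` for which `γᵢᴴ γⱼ` is skew-adjoint whenever `i ≠ j`. Going once around the
cycle changes `γ` only by a sign, so `Aᵢ = ± γᵢᴴ J γᵢ₊₁` for every `i` modulo `2k + 1`.

In the semi-inner product `⟪x, y⟫ = Re tr (ρ xᴴ y)` both `γ` and `J γ` are orthonormal families, and
`G i j = ⟪γᵢ, J γⱼ⟫` is a skew-symmetric matrix of odd size. A unit vector in its kernel gives a
unit vector in the span of `J γ` orthogonal to every `γᵢ`, and Bessel's inequality with this extra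
vector bounds the sum of the squared entries of `G` by `2k`. Every `⟨Aᵢ⟩²` occurs twice among them.
-/

section SkewGram

open scoped InnerProductSpace

theorem det_eq_zero_of_transpose_eq_neg {ι K : Type*} [Fintype ι] [DecidableEq ι]
    [CommRing K] [NoZeroDivisors K] [NeZero (2 : K)] (hι : Odd (Fintype.card ι))
    {G : Matrix ι ι K} (hG : Gᵀ = -G) : G.det = 0 := by
  have hdet : G.det = -G.det := by
    rw [← neg_one_mul, ← hι.neg_one_pow, ← det_neg, ← hG, det_transpose]
  have h2 : 2 * G.det = 0 := by linear_combination hdet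
  exact (mul_eq_zero.mp h2).resolve_left two_ne_zero

variable {ι E : Type*} [Fintype ι] [SeminormedAddCommGroup E] [InnerProductSpace ℝ E]

theorem sum_inner_sq_add_inner_sq_le {e : ι → E} (he : Orthonormal ℝ e) {y : E} (hy : ‖y‖ = 1)
    (hey : ∀ i, ⟪e i, y⟫_ℝ = 0) (x : E) :
    ∑ i, ⟪e i, x⟫_ℝ ^ 2 + ⟪y, x⟫_ℝ ^ 2 ≤ ‖x‖ ^ 2 := by
  have hnorm : ‖x - ⟪y, x⟫_ℝ • y‖ ^ 2 = ‖x‖ ^ 2 - ⟪y, x⟫_ℝ ^ 2 := by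
    rw [norm_sub_sq_real, real_inner_smul_right, real_inner_comm, norm_smul, hy, Real.norm_eq_abs,
      mul_one, sq_abs]
    ring
  have hbessel := he.sum_inner_products_le (x - ⟪y, x⟫_ℝ • y) (s := Finset.univ)
  simp only [inner_sub_right, inner_smul_right, hey, mul_zero, sub_zero, Real.norm_eq_abs, sq_abs,
    hnorm] at hbessel
  linarith

theorem exists_mulVec_eq_zero_and_dotProduct_self_eq_one [DecidableEq ι] {G : Matrix ι ι ℝ}
    (hG : G.det = 0) : ∃ w, G *ᵥ w = 0 ∧ w ⬝ᵥ w = 1 := by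
  obtain ⟨v, hv, hGv⟩ := exists_mulVec_eq_zero_iff.mpr hG
  have hvv : 0 < v ⬝ᵥ v := by simpa using dotProduct_star_self_pos_iff.mpr hv
  refine ⟨(√(v ⬝ᵥ v))⁻¹ • v, by rw [mulVec_smul, hGv, smul_zero], ?_⟩
  rw [smul_dotProduct, dotProduct_smul, smul_smul, ← mul_inv, Real.mul_self_sqrt hvv.le,
    smul_eq_mul, inv_mul_cancel₀ hvv.ne']

theorem sum_sum_inner_sq_le_of_skew (hι : Odd (Fintype.card ι)) {e f : ι → E}
    (he : Orthonormal ℝ e) (hf : Orthonormal ℝ f)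
    (hskew : ∀ i j, ⟪e j, f i⟫_ℝ = -⟪e i, f j⟫_ℝ) :
    ∑ i, ∑ j, ⟪e i, f j⟫_ℝ ^ 2 ≤ (Fintype.card ι : ℝ) - 1 := by
  classical
  have hdet : (Matrix.of fun i j ↦ ⟪e i, f j⟫_ℝ).det = 0 :=
    det_eq_zero_of_transpose_eq_neg hι (Matrix.ext hskew)
  obtain ⟨w, hGw, hw⟩ := exists_mulVec_eq_zero_and_dotProduct_self_eq_one hdet
  let y := ∑ j, w j • f j
  have hy : ‖y‖ = 1 := by
    have : ‖y‖ ^ 2 = 1 := by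
      rw [← real_inner_self_eq_norm_sq, hf.inner_sum]
      exact hw
    exact (pow_eq_one_iff_of_nonneg (norm_nonneg y) two_ne_zero).mp this
  have hey (i : ι) : ⟪e i, y⟫_ℝ = 0 := by
    simpa [y, inner_sum, inner_smul_right, mulVec, dotProduct, mul_comm] using congrFun hGw i
  have hyf (j : ι) : ⟪y, f j⟫_ℝ = w j := hf.inner_left_fintype w j
  have hcol (j : ι) : ∑ i, ⟪e i, f j⟫_ℝ ^ 2 ≤ 1 - w j ^ 2 := by
    have := sum_inner_sq_add_inner_sq_le he hy hey (f j)
    rw [hyf, hf.norm_eq_one, one_pow] at this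
    linarith
  calc ∑ i, ∑ j, ⟪e i, f j⟫_ℝ ^ 2 = ∑ j, ∑ i, ⟪e i, f j⟫_ℝ ^ 2 := Finset.sum_comm
    _ ≤ ∑ j, (1 - w j ^ 2) := Finset.sum_le_sum fun j _ ↦ hcol j
    _ = Fintype.card ι - w ⬝ᵥ w := by simp [dotProduct, sq]
    _ = Fintype.card ι - 1 := by rw [hw]

end SkewGram

section State

variable {R : Type*} [Ring R] [StarRing R] [Algebra ℝ R]

/-- A state on a real *-algebra. The real part of a state on a complex *-algebra is one, which is
how expectation values enter here. -/
structure IsState (φ : R →ₗ[ℝ] ℝ) : Prop where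
  map_one : φ 1 = 1
  map_star (x : R) : φ (star x) = φ x
  map_star_mul_self_nonneg (x : R) : 0 ≤ φ (star x * x)

variable {φ : R →ₗ[ℝ] ℝ}

theorem IsState.map_star_mul_mul_of_star_eq_neg (hφ : IsState φ) {J : R} (hJ : star J = -J)
    (x y : R) : φ (star y * (J * x)) = -φ (star x * (J * y)) := by
  rw [← hφ.map_star, ← map_neg]
  simp [hJ, mul_assoc]

variable [StarModule ℝ R]

/-- The semi-inner product `⟪x, y⟫ = φ (star x * y)` of the Gelfand–Naimark–Segal construction. -/
abbrev IsState.preInnerCore (hφ : IsState φ) : PreInnerProductSpace.Core ℝ R where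
  inner x y := φ (star x * y)
  conj_inner_symm x y := by rw [← hφ.map_star (star y * x)]; simp
  re_inner_nonneg := hφ.map_star_mul_self_nonneg
  add_left x y z := by simp [add_mul]
  smul_left x y r := by simp

theorem IsState.sum_sum_sq_le {ι : Type*} [Fintype ι] (hφ : IsState φ)
    (hι : Odd (Fintype.card ι)) {J : R} (hJ : star J * J = 1) (hJstar : star J = -J) {γ : ι → R}
    (hγ : ∀ i, star (γ i) * γ i = 1)
    (hskew : Pairwise fun i j ↦ star (star (γ i) * γ j) = -(star (γ i) * γ j)) :
    ∑ i, ∑ j, φ (star (γ i) * (J * γ j)) ^ 2 ≤ (Fintype.card ι : ℝ) - 1 := by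
  classical
  let _ : SeminormedAddCommGroup R :=
    InnerProductSpace.Core.toSeminormedAddCommGroup (c := hφ.preInnerCore)
  let _ : InnerProductSpace ℝ R := InnerProductSpace.ofCore hφ.preInnerCore
  have inner_def (x y : R) : inner ℝ x y = φ (star x * y) := rfl
  have hγ' : Orthonormal ℝ γ := by
    refine orthonormal_iff_ite.mpr fun i j ↦ ?_
    rw [inner_def]
    split_ifs with hij
    · rw [hij, hγ, hφ.map_one]
    · have := hφ.map_star (star (γ i) * γ j)
      rw [hskew hij, map_neg] at this
      linarith
  have hJγ : Orthonormal ℝ fun i ↦ J * γ i := by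
    refine orthonormal_iff_ite.mpr fun i j ↦ ?_
    rw [← orthonormal_iff_ite.mp hγ' i j, inner_def, inner_def, star_mul, mul_assoc,
      ← mul_assoc (star J), hJ, one_mul]
  have hG (i j : ι) : inner ℝ (γ j) (J * γ i) = -inner ℝ (γ i) (J * γ j) := by
    rw [inner_def, inner_def, hφ.map_star_mul_mul_of_star_eq_neg hJstar]
  simpa only [inner_def] using sum_sum_inner_sq_le_of_skew hι hγ' hJγ hG

end State

section PrefixProd

/-- The product `C 0 * C 1 * ⋯ * C (n - 1)`. -/
def prefixProd {M : Type*} [Monoid M] (C : ℕ → M) (n : ℕ) : M :=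
  ((List.range n).map C).prod

section Monoid

variable {M : Type*} [Monoid M] (C : ℕ → M)

@[simp]
theorem prefixProd_zero : prefixProd C 0 = 1 := rfl

theorem prefixProd_succ (n : ℕ) : prefixProd C (n + 1) = prefixProd C n * C n :=
  List.prod_range_succ C n

theorem prefixProd_add (m n : ℕ) :
    prefixProd C (m + n) = prefixProd C m * prefixProd (fun i ↦ C (m + i)) n := by
  simp [prefixProd, List.range_add, Function.comp_def]

variable {C}

theorem commute_prefixProd_right {x : M} {n : ℕ} (h : ∀ i < n, Commute x (C i)) :
    Commute x (prefixProd C n) :=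
  Commute.list_prod_right _ _ (by simpa using h)

theorem prefixProd_const_mul {x : M} (h : ∀ i, Commute x (C i)) (n : ℕ) :
    prefixProd (fun i ↦ x * C i) n = x ^ n * prefixProd C n := by
  induction n with
  | zero => simp
  | succ n ih =>
    have hx : Commute x (prefixProd C n) := commute_prefixProd_right fun i _ ↦ h i
    rw [prefixProd_succ, prefixProd_succ, ih, pow_succ, mul_assoc, mul_assoc, hx.left_comm]

theorem prefixProd_mem_unitary [StarMul M] (hC : ∀ i, C i ∈ unitary M) (n : ℕ) :
    prefixProd C n ∈ unitary M :=
  Submonoid.list_prod_mem _ (by simpa using fun i _ ↦ hC i)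

theorem star_prefixProd_mul_prefixProd_add [StarMul M] (hC : ∀ i, C i ∈ unitary M) (m n : ℕ) :
    star (prefixProd C m) * prefixProd C (m + n) = prefixProd (fun i ↦ C (m + i)) n := by
  rw [prefixProd_add, ← mul_assoc,
    Unitary.star_mul_self_of_mem (prefixProd_mem_unitary hC m), one_mul]

end Monoid

variable {R : Type*} [Ring R]

theorem mul_prefixProd_of_smul_comm {C : ℕ → R} {x : R} {s : ℕ → ℤ}
    (h : ∀ i, x * C i = s i • (C i * x)) (n : ℕ) :
    x * prefixProd C n = (∏ i ∈ Finset.range n, s i) • (prefixProd C n * x) := by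
  induction n with
  | zero => simp
  | succ n ih =>
    rw [prefixProd_succ, ← mul_assoc, ih, smul_mul_assoc, mul_assoc, h, mul_smul_comm, smul_smul,
      mul_assoc, Finset.prod_range_succ]

end PrefixProd

section Path

variable {R : Type*} [Ring R] {C : ℕ → R} {n : ℕ}

/-- The anticommutativity graph of `C 0, …, C (n - 1)` is a path; later terms are arbitrary. -/
structure IsAnticommutingPath (C : ℕ → R) (n : ℕ) : Prop where
  anticomm (i : ℕ) : i + 1 < n → C (i + 1) * C i = -(C i * C (i + 1))
  comm (i j : ℕ) : i + 1 < j → j < n → Commute (C j) (C i)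

namespace IsAnticommutingPath

theorem of_le (hC : IsAnticommutingPath C n) {l : ℕ} (hl : l ≤ n) : IsAnticommutingPath C l where
  anticomm i hi := hC.anticomm i (hi.trans_le hl)
  comm i j hij hj := hC.comm i j hij (hj.trans_le hl)

theorem shift {m : ℕ} (hC : IsAnticommutingPath C (m + n)) :
    IsAnticommutingPath (fun i ↦ C (m + i)) n where
  anticomm i hi := hC.anticomm (m + i) (by omega)
  comm i j hij hj := hC.comm (m + i) (m + j) (by omega) (by omega)

theorem const_mul (hC : IsAnticommutingPath C n) {x : R} (hx : ∀ i, Commute x (C i)) :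
    IsAnticommutingPath (fun i ↦ x * C i) n where
  anticomm i hi := by
    rw [(hx _).symm.mul_mul_mul_comm, (hx _).symm.mul_mul_mul_comm, hC.anticomm i hi, mul_neg]
  comm i j hij hj := by
    have hxx : Commute x (x * C i) := (Commute.refl x).mul_right (hx i)
    exact hxx.mul_left ((hx j).symm.mul_right (hC.comm i j hij hj))

theorem mul_prefixProd_succ (hC : IsAnticommutingPath C (n + 2)) :
    C (n + 1) * prefixProd C (n + 1) = -(prefixProd C (n + 1) * C (n + 1)) := by
  have hcomm : Commute (C (n + 1)) (prefixProd C n) :=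
    commute_prefixProd_right fun i hi ↦ hC.comm i (n + 1) (by omega) (by omega)
  rw [prefixProd_succ, hcomm.left_comm, hC.anticomm n (by omega), mul_neg, mul_assoc]

theorem star_prefixProd_succ [StarRing R] {ε : ℤ} (hstar : ∀ i, star (C i) = ε • C i)
    (hC : IsAnticommutingPath C (n + 1)) :
    star (prefixProd C (n + 1)) = (ε * (-ε) ^ n) • prefixProd C (n + 1) := by
  induction n with
  | zero => simp [prefixProd_succ, hstar]
  | succ n ih =>
    rw [prefixProd_succ, star_mul, ih (hC.of_le (by omega)), hstar, smul_mul_smul_comm,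
      hC.mul_prefixProd_succ, smul_neg, ← neg_smul]
    congr 1
    ring

theorem star_star_prefixProd_mul_prefixProd [StarRing R] (hC : IsAnticommutingPath C n)
    (hunit : ∀ i, C i ∈ unitary R) (hskew : ∀ i, star (C i) = -C i) {i j : ℕ}
    (hij : i ≠ j) (hi : i ≤ n) (hj : j ≤ n) :
    star (star (prefixProd C i) * prefixProd C j) = -(star (prefixProd C i) * prefixProd C j) := by
  wlog hlt : i < j generalizing i j
  · have := this hij.symm hj hi (by omega)
    rw [star_mul, star_star] at this ⊢
    rw [this, neg_neg]
  obtain ⟨l, rfl⟩ := Nat.exists_eq_add_of_lt hlt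
  rw [add_assoc] at hj ⊢
  rw [star_prefixProd_mul_prefixProd_add hunit,
    (hC.of_le hj).shift.star_prefixProd_succ (ε := -1) (by simpa using fun t ↦ hskew (i + t))]
  simp

end IsAnticommutingPath

end Path

section Cycle

variable {R : Type*} [Ring R]

/-- The anticommutativity graph of `A` is the cycle on `Fin m` (a loop for `m = 1`). -/
structure IsAnticommutingCycle {m : ℕ} [NeZero m] (A : Fin m → R) : Prop where
  anticomm (i j : Fin m) : j = i + 1 ∨ i = j + 1 → A i * A j = -(A j * A i)
  comm (i j : Fin m) : i ≠ j → ¬(j = i + 1 ∨ i = j + 1) → A i * A j = A j * A i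

/-- The `m`-periodic extension of a family indexed by `Fin m`. -/
def periodicExtension {α : Type*} {m : ℕ} [NeZero m] (A : Fin m → α) (n : ℕ) : α :=
  A (Fin.ofNat m n)

/-- The product of `A` once around the cycle, `A 0 * A 1 * ⋯ * A (m - 1)`. -/
def cycleProd {m : ℕ} [NeZero m] (A : Fin m → R) : R :=
  prefixProd (periodicExtension A) m

@[simp]
theorem periodicExtension_val {α : Type*} {m : ℕ} [NeZero m] (A : Fin m → α) (i : Fin m) :
    periodicExtension A i = A i := by
  simp [periodicExtension]

theorem fin_add_one_ne_sub_one {m : ℕ} [NeZero m] (hm : 3 ≤ m) (i : Fin m) : i + 1 ≠ i - 1 := by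
  intro h
  have h2 : (1 + 1 : Fin m) = 0 := by
    have : i + (1 + 1) = i + 0 := by rw [← add_assoc, h, sub_add_cancel, add_zero]
    exact add_left_cancel this
  have := congrArg Fin.val h2
  rw [Fin.val_add, Fin.val_one', Nat.mod_eq_of_lt (by omega : 1 < m),
    Nat.mod_eq_of_lt (by omega)] at this
  simp at this

namespace IsAnticommutingCycle

theorem commute_cycleProd {m : ℕ} [NeZero m] {A : Fin m → R} (hA : IsAnticommutingCycle A)
    (hm : 3 ≤ m) (i : Fin m) : Commute (A i) (cycleProd A) := by
  let sign (j : Fin m) : ℤ := (if j = i + 1 then -1 else 1) * (if j = i - 1 then -1 else 1)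
  have hsign (j : Fin m) : A i * A j = sign j • (A j * A i) := by
    by_cases hnext : j = i + 1
    · have hprev : j ≠ i - 1 := hnext ▸ fin_add_one_ne_sub_one hm i
      simp [sign, ← hnext, hprev, hA.anticomm i j (.inl hnext)]
    by_cases hprev : j = i - 1
    · simp [sign, hnext, ← hprev, hA.anticomm i j (.inr (by simp [hprev]))]
    rcases eq_or_ne i j with rfl | hij
    · simp [sign, hnext, hprev]
    · have hprev' : i ≠ j + 1 := fun h ↦ hprev (by simp [h])
      simp [sign, hnext, hprev, hA.comm i j hij (by tauto)]
  have hprod : ∏ n ∈ Finset.range m, sign (Fin.ofNat m n) = 1 := by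
    rw [Finset.prod_range, Finset.prod_mul_distrib]
    simp
  have := mul_prefixProd_of_smul_comm (C := periodicExtension A) (fun n ↦ hsign (Fin.ofNat m n)) m
  rwa [hprod, one_smul] at this

theorem isAnticommutingPath {n : ℕ} {A : Fin (n + 1) → R} (hA : IsAnticommutingCycle A) :
    IsAnticommutingPath (periodicExtension A) n where
  anticomm i _ := hA.anticomm _ _ (.inr (by simp [Fin.ext_iff, Fin.val_add]))
  comm i j hij hj := by
    refine hA.comm _ _ ?_ ?_ <;>
      simp [Fin.ext_iff, Fin.val_add, Nat.mod_eq_of_lt (show i < n + 1 by omega),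
        Nat.mod_eq_of_lt (show j < n + 1 by omega), Nat.mod_eq_of_lt (show i + 1 < n + 1 by omega),
        Nat.mod_eq_of_lt (show j + 1 < n + 1 by omega)] <;> omega

theorem star_cycleProd [StarRing R] {n : ℕ} (hn : 2 ≤ n) {A : Fin (n + 1) → R}
    (hA : IsAnticommutingCycle A) (hstar : ∀ i, star (A i) = A i)
    (hsq : ∀ i, A i * A i = 1) : star (cycleProd A) = (-1 : ℤ) ^ (n + 1) • cycleProd A := by
  obtain ⟨l, rfl⟩ := Nat.exists_eq_add_of_le' (show 1 ≤ n by omega)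
  let B := periodicExtension A
  have hJ : cycleProd A = prefixProd B (l + 1) * B (l + 1) := prefixProd_succ B (l + 1)
  have hlast : B (l + 1) * B (l + 1) = 1 := hsq _
  have hprefix : prefixProd B (l + 1) = cycleProd A * B (l + 1) := by
    rw [hJ, mul_assoc, hlast, mul_one]
  have hcomm : Commute (B (l + 1)) (cycleProd A) := hA.commute_cycleProd (by omega) _
  have hstarB (i : ℕ) : star (B i) = (1 : ℤ) • B i := by rw [one_smul]; exact hstar _
  calc star (cycleProd A) = star (B (l + 1)) * star (prefixProd B (l + 1)) := by rw [hJ, star_mul]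
    _ = (-1 : ℤ) ^ l • (B (l + 1) * prefixProd B (l + 1)) := by
      rw [hA.isAnticommutingPath.star_prefixProd_succ hstarB, hstarB, one_smul, one_mul,
        mul_smul_comm]
    _ = (-1 : ℤ) ^ (l + 2) • cycleProd A := by
      rw [hprefix, hcomm.left_comm, hlast, mul_one, pow_add, neg_one_sq, mul_one]

end IsAnticommutingCycle

end Cycle

section OddHole

variable {R : Type*} [Ring R] [StarRing R] {k : ℕ} {A : Fin (2 * k + 1) → R}

/-- Hermitian unitary observables whose anticommutativity graph is an odd cycle; the triangle
`k = 1` is allowed. -/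
structure IsOddHole (A : Fin (2 * k + 1) → R) : Prop extends IsAnticommutingCycle A where
  star_eq (i : Fin (2 * k + 1)) : star (A i) = A i
  mul_self (i : Fin (2 * k + 1)) : A i * A i = 1
  one_le : 1 ≤ k

/-- The Majorana operators `γ j = (J * A 0) * ⋯ * (J * A (j - 1))` of the Jordan–Wigner
transformation of the cycle `A`, in which the product `J` around the cycle replaces the imaginary
unit. -/
def majorana (A : Fin (2 * k + 1) → R) : ℕ → R :=
  prefixProd fun i ↦ cycleProd A * periodicExtension A i

namespace IsOddHole

theorem mem_unitary (hA : IsOddHole A) (i : Fin (2 * k + 1)) : A i ∈ unitary R := by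
  simp [Unitary.mem_iff, hA.star_eq, hA.mul_self]

theorem cycleProd_mem_unitary (hA : IsOddHole A) : cycleProd A ∈ unitary R :=
  prefixProd_mem_unitary (fun _ ↦ hA.mem_unitary _) _

theorem star_cycleProd (hA : IsOddHole A) : star (cycleProd A) = -cycleProd A := by
  have hk := hA.one_le
  rw [hA.toIsAnticommutingCycle.star_cycleProd (by omega) hA.star_eq hA.mul_self,
    (odd_two_mul_add_one k).neg_one_pow, neg_smul, one_smul]

theorem cycleProd_mul_self (hA : IsOddHole A) : cycleProd A * cycleProd A = -1 := by
  rw [← Unitary.star_mul_self_of_mem hA.cycleProd_mem_unitary, hA.star_cycleProd, neg_mul, neg_neg]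

theorem commute_cycleProd_periodicExtension (hA : IsOddHole A) (i : ℕ) :
    Commute (cycleProd A) (periodicExtension A i) := by
  have hk := hA.one_le
  exact (hA.commute_cycleProd (by omega) _).symm

theorem commute_cycleProd_majorana (hA : IsOddHole A) (n : ℕ) :
    Commute (cycleProd A) (majorana A n) :=
  commute_prefixProd_right fun i _ ↦
    (Commute.refl _).mul_right (hA.commute_cycleProd_periodicExtension i)

theorem star_mul_self_majorana (hA : IsOddHole A) (n : ℕ) :
    star (majorana A n) * majorana A n = 1 :=
  Unitary.star_mul_self_of_mem <| prefixProd_mem_unitary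
    (fun _ ↦ mul_mem hA.cycleProd_mem_unitary (hA.mem_unitary _)) n

theorem star_star_majorana_mul_majorana (hA : IsOddHole A) {i j : ℕ} (hij : i ≠ j)
    (hi : i ≤ 2 * k) (hj : j ≤ 2 * k) :
    star (star (majorana A i) * majorana A j) = -(star (majorana A i) * majorana A j) := by
  refine (hA.isAnticommutingPath.const_mul
    hA.commute_cycleProd_periodicExtension).star_star_prefixProd_mul_prefixProd
      (fun _ ↦ mul_mem hA.cycleProd_mem_unitary (hA.mem_unitary _)) (fun n ↦ ?_) hij hi hj
  rw [star_mul, hA.star_cycleProd, mul_neg, (hA.commute_cycleProd_periodicExtension n).eq]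
  exact congrArg (fun x ↦ -(x * _)) (hA.star_eq _)

theorem majorana_eq_one_or_eq_neg_one (hA : IsOddHole A) :
    majorana A (2 * k + 1) = 1 ∨ majorana A (2 * k + 1) = -1 := by
  have h : majorana A (2 * k + 1) = (-1) ^ (k + 1) := by
    calc majorana A (2 * k + 1) = cycleProd A ^ (2 * k + 1) * cycleProd A :=
          prefixProd_const_mul hA.commute_cycleProd_periodicExtension _
      _ = (-1) ^ (k + 1) := by rw [← pow_succ, ← hA.cycleProd_mul_self, ← sq, ← pow_mul]; rfl
  exact h ▸ neg_one_pow_eq_or R (k + 1)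

theorem majorana_val_add_one (hA : IsOddHole A) (i : Fin (2 * k + 1)) :
    majorana A (i + 1 : Fin (2 * k + 1)) = majorana A (i + 1) ∨
      majorana A (i + 1 : Fin (2 * k + 1)) = -majorana A (i + 1) := by
  rcases eq_or_ne i (Fin.last (2 * k)) with rfl | hi
  · have h0 : majorana A 0 = 1 := prefixProd_zero _
    rw [Fin.last_add_one, Fin.val_last, Fin.val_zero, h0]
    rcases hA.majorana_eq_one_or_eq_neg_one with h | h <;> simp [h]
  · exact .inl (by rw [Fin.val_add_one_of_lt (Fin.lt_last_iff_ne_last.mpr hi)])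

theorem star_majorana_mul_majorana_succ (hA : IsOddHole A) (i : Fin (2 * k + 1)) :
    star (majorana A i) * (cycleProd A * majorana A (i + 1)) = -A i := by
  have hsucc : majorana A (i + 1) = majorana A i * (cycleProd A * A i) := by
    rw [majorana, prefixProd_succ, periodicExtension_val]
  rw [hsucc, (hA.commute_cycleProd_majorana i).left_comm, ← mul_assoc, hA.star_mul_self_majorana,
    one_mul, ← mul_assoc, hA.cycleProd_mul_self, neg_one_mul]

theorem star_majorana_mul_majorana_add_one (hA : IsOddHole A) (i : Fin (2 * k + 1)) :
    star (majorana A i) * (cycleProd A * majorana A (i + 1 : Fin (2 * k + 1))) = A i ∨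
      star (majorana A i) * (cycleProd A * majorana A (i + 1 : Fin (2 * k + 1))) = -A i := by
  rcases hA.majorana_val_add_one i with h | h <;>
    simp [h, hA.star_majorana_mul_majorana_succ]

end IsOddHole

end OddHole

section Uncertainty

theorem sum_cyclic_neighbors_le_sum_sum {m : ℕ} [NeZero m] (hm : 3 ≤ m) {f : Fin m → Fin m → ℝ}
    (hf : ∀ i j, 0 ≤ f i j) : ∑ i, (f i (i + 1) + f (i + 1) i) ≤ ∑ i, ∑ j, f i j := by
  have hrow (i : Fin m) : f i (i + 1) + f i (i - 1) ≤ ∑ j, f i j := by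
    rw [← Finset.sum_pair (f := f i) (fin_add_one_ne_sub_one hm i)]
    exact Finset.sum_le_sum_of_subset_of_nonneg (Finset.subset_univ _) fun j _ _ ↦ hf i j
  have hshift : ∑ i, f (i + 1) i = ∑ i, f i (i - 1) :=
    Fintype.sum_equiv (Equiv.addRight 1) _ _ fun i ↦ by simp
  calc ∑ i, (f i (i + 1) + f (i + 1) i) = ∑ i, (f i (i + 1) + f i (i - 1)) := by
        rw [Finset.sum_add_distrib, hshift, Finset.sum_add_distrib]
    _ ≤ ∑ i, ∑ j, f i j := Finset.sum_le_sum fun i _ ↦ hrow i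

theorem odd_hole_uncertainty_general {R : Type*} [Ring R] [StarRing R] [Algebra ℝ R]
    [StarModule ℝ R] {φ : R →ₗ[ℝ] ℝ} (hφ : IsState φ) {k : ℕ} {A : Fin (2 * k + 1) → R}
    (hA : IsOddHole A) : ∑ i, φ (A i) ^ 2 ≤ k := by
  let G (i j : Fin (2 * k + 1)) : ℝ := φ (star (majorana A i) * (cycleProd A * majorana A j))
  have hG (i) : G i (i + 1) ^ 2 = φ (A i) ^ 2 := by
    rcases hA.star_majorana_mul_majorana_add_one i with h | h <;> simp [G, h]
  have hskew (i j) : G j i = -G i j := hφ.map_star_mul_mul_of_star_eq_neg hA.star_cycleProd _ _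
  have hG' (i) : G (i + 1) i ^ 2 = φ (A i) ^ 2 := by rw [hskew, neg_sq, hG]
  have hsum : ∑ i, ∑ j, G i j ^ 2 ≤ 2 * k := by
    simpa using hφ.sum_sum_sq_le (γ := fun i : Fin (2 * k + 1) ↦ majorana A i) (by simp)
      (Unitary.star_mul_self_of_mem hA.cycleProd_mem_unitary) hA.star_cycleProd
      (fun i ↦ hA.star_mul_self_majorana i) fun i j hij ↦
        hA.star_star_majorana_mul_majorana (Fin.val_ne_of_ne hij) (by omega) (by omega)
  have hk := hA.one_le
  have htwice : 2 * ∑ i, φ (A i) ^ 2 ≤ 2 * k := by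
    calc 2 * ∑ i, φ (A i) ^ 2 = ∑ i, (G i (i + 1) ^ 2 + G (i + 1) i ^ 2) := by
          simp only [hG, hG', ← two_mul, Finset.mul_sum]
      _ ≤ ∑ i, ∑ j, G i j ^ 2 :=
          sum_cyclic_neighbors_le_sum_sum (by omega) fun i j ↦ sq_nonneg (G i j)
      _ ≤ 2 * k := hsum
  exact le_of_mul_le_mul_left htwice two_pos

end Uncertainty

section DensityMatrix

variable {n : Type*} [Fintype n]

/-- The real part of the expectation value `⟨X⟩ = tr (ρ X)`. -/
noncomputable def reExpectation (ρ : Matrix n n ℂ) : Matrix n n ℂ →ₗ[ℝ] ℝ :=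
  Complex.reLm ∘ₗ traceLinearMap n ℝ ℂ ∘ₗ LinearMap.mulLeft ℝ ρ

theorem isState_reExpectation [DecidableEq n] {ρ : Matrix n n ℂ} (hρ : ρ.PosSemidef)
    (htr : ρ.trace = 1) : IsState (reExpectation ρ) where
  map_one := by simp [reExpectation, htr]
  map_star X := by
    have : (ρ * Xᴴ).trace = star (ρ * X).trace := by
      rw [← trace_conjTranspose, conjTranspose_mul, hρ.isHermitian.eq, trace_mul_comm]
    simp [reExpectation, star_eq_conjTranspose, this]
  map_star_mul_self_nonneg X := by
    have : (ρ * (Xᴴ * X)).trace = (X * ρ * Xᴴ).trace := by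
      rw [← mul_assoc, trace_mul_comm, ← mul_assoc]
    simpa [reExpectation, star_eq_conjTranspose, this] using
      (Complex.nonneg_iff.mp (hρ.mul_mul_conjTranspose_same X).trace_nonneg).1

end DensityMatrix

/-- Odd-hole uncertainty inequality: if Hermitian unitary observables
`A₀, …, A_{2k}` anticommute precisely for cyclically adjacent indices (mod `2k+1`) and
commute otherwise, then `Σᵢ (Re tr(ρAᵢ))² ≤ k` for every density matrix `ρ`. -/
theorem odd_hole_uncertainty (k d : ℕ) (hk : 1 ≤ k)
    (ρ : Matrix (Fin d) (Fin d) ℂ) (hρ : ρ.PosSemidef) (htr : ρ.trace = 1)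
    (A : Fin (2 * k + 1) → Matrix (Fin d) (Fin d) ℂ)
    (hherm : ∀ i, (A i)ᴴ = A i) (hunit : ∀ i, A i * A i = 1)
    (hanti : ∀ i j : Fin (2 * k + 1), (j = i + 1 ∨ i = j + 1) →
      A i * A j = -(A j * A i))
    (hcomm : ∀ i j : Fin (2 * k + 1), i ≠ j → ¬(j = i + 1 ∨ i = j + 1) →
      A i * A j = A j * A i) :
    ∑ i, ((ρ * A i).trace.re) ^ 2 ≤ (k : ℝ) :=
  odd_hole_uncertainty_general (isState_reExpectation hρ htr) ⟨⟨hanti, hcomm⟩, hherm, hunit, hk⟩
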